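/- arXiv:2307.14431 — 2 statements merged into one kernel-verified Lean document; each statement's English description precedes it below -/
import Mathlib

section
/- Let S be a ring (not necessarily unital) and let U be a set of local units for S. Then the corner uSu is a Rickart ring for every u ∈ U if and only if S is locally Rickart (i.e., the corner eSe is a Rickart ring for every idempotent e ∈ S). -/
/-- The corner `eSe = {exe : x ∈ S}` of a ring. -/
def corner {S : Type*} [NonUnitalRing S] (e : S) : Set S :=
  Set.range fun y => e * y * e

/-- `U` is a set of local units for `S`: a set of idempotents such that every finite
subset of `S` admits a unit from `U`. -/
def IsLocalUnits {S : Type*} [NonUnitalRing S] (U : Set S) : Prop :=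
  (∀ u ∈ U, IsIdempotentElem u) ∧
    ∀ T : Finset S, ∃ u ∈ U, ∀ s ∈ T, u * s = s ∧ s * u = s

/-- The corner `eSe` (a unital ring with identity `e`) is a Rickart ring: for every
`x ∈ eSe`, the left annihilator of `x` in `eSe` equals `(eSe)f` for some idempotent
`f ∈ eSe`, and the right annihilator of `x` in `eSe` equals `g(eSe)` for some
idempotent `g ∈ eSe`. -/
def IsRickartCorner {S : Type*} [NonUnitalRing S] (e : S) : Prop :=
  ∀ x ∈ corner e,
    (∃ f ∈ corner e, IsIdempotentElem f ∧
      {y | y ∈ corner e ∧ y * x = 0} = {y | ∃ z ∈ corner e, y = z * f}) ∧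
    (∃ g ∈ corner e, IsIdempotentElem g ∧
      {y | y ∈ corner e ∧ x * y = 0} = {y | ∃ z ∈ corner e, y = g * z})

/-!
A local unit `u` for `e` has `e ∈ uSu`, so `eSe` is a corner of `uSu`, and it is enough that corners
of Rickart rings are Rickart. If `f` is an idempotent generating the left annihilator of `x ∈ eSe`
in `uSu`, then `u - e` kills `x`, so `(u - e)f = u - e` and therefore `(u - e)fe = 0`. Hence
`fe = efe` lies in `eSe`, where it generates the left annihilator of `x`. The right-hand case is the
same in `Sᵐᵒᵖ`.
-/

section Corner

open MulOpposite

variable {S : Type*} [NonUnitalRing S] {e u x : S}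

theorem mem_corner_iff (he : IsIdempotentElem e) : x ∈ corner e ↔ e * x = x ∧ x * e = x :=
  Subsemigroup.mem_corner_iff he

theorem mul_mem_corner {y : S} (hx : x ∈ corner e) (hy : y ∈ corner e) : x * y ∈ corner e :=
  (Subsemigroup.corner e).mul_mem hx hy

theorem sub_mem_corner {y : S} (hx : x ∈ corner e) (hy : y ∈ corner e) : x - y ∈ corner e :=
  (NonUnitalRing.corner e).sub_mem hx hy

theorem self_mem_corner (he : IsIdempotentElem e) : e ∈ corner e :=
  (mem_corner_iff he).2 ⟨he, he⟩

theorem corner_subset_corner (heu : e ∈ corner u) : corner e ⊆ corner u := by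
  obtain ⟨a, rfl⟩ := heu
  rintro _ ⟨b, rfl⟩
  exact ⟨a * u * b * u * a, by simp only [mul_assoc]⟩

theorem op_mem_corner_op_iff : op x ∈ corner (op e) ↔ x ∈ corner e := by
  simp only [corner, Set.mem_range, MulOpposite.exists, ← op_mul, op_inj, mul_assoc]

end Corner

/-- `f` is an idempotent of the corner `eSe` generating the left annihilator of `x` in `eSe`.
Idempotence is not a field: it is `mul_eq_self` at `y = f`. Right annihilators are treated as left
annihilators in `Sᵐᵒᵖ`. -/
structure IsLeftAnnihilatorIdempotent {S : Type*} [NonUnitalRing S] (e x f : S) : Prop where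
  mem_corner : f ∈ corner e
  mul_eq_zero : f * x = 0
  mul_eq_self : ∀ y ∈ corner e, y * x = 0 → y * f = y

section Rickart

open MulOpposite

variable {S : Type*} [NonUnitalRing S] {e u x f g : S}

theorem isLeftAnnihilatorIdempotent_iff :
    IsLeftAnnihilatorIdempotent e x f ↔ f ∈ corner e ∧ IsIdempotentElem f ∧
      {y | y ∈ corner e ∧ y * x = 0} = {y | ∃ z ∈ corner e, y = z * f} := by
  constructor
  · rintro ⟨hf, hfx, hself⟩
    refine ⟨hf, hself f hf hfx, Set.Subset.antisymm ?_ ?_⟩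
    · rintro y ⟨hy, hyx⟩
      exact ⟨y, hy, (hself y hy hyx).symm⟩
    · rintro _ ⟨z, hz, rfl⟩
      exact ⟨mul_mem_corner hz hf, by rw [mul_assoc, hfx, mul_zero]⟩
  · rintro ⟨hf, hff, hann⟩
    have hfx : f ∈ {y | y ∈ corner e ∧ y * x = 0} := hann ▸ ⟨f, hf, hff.eq.symm⟩
    refine ⟨hf, hfx.2, fun y hy hyx => ?_⟩
    obtain ⟨z, -, rfl⟩ : y ∈ {y | ∃ z ∈ corner e, y = z * f} := hann ▸ ⟨hy, hyx⟩
    rw [mul_assoc, hff.eq]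

theorem isLeftAnnihilatorIdempotent_op_iff :
    IsLeftAnnihilatorIdempotent (op e) (op x) (op g) ↔ g ∈ corner e ∧ IsIdempotentElem g ∧
      {y | y ∈ corner e ∧ x * y = 0} = {y | ∃ z ∈ corner e, y = g * z} := by
  simp only [isLeftAnnihilatorIdempotent_iff, IsIdempotentElem, Set.ext_iff, Set.mem_ofPred_eq,
    MulOpposite.forall, MulOpposite.exists, op_mem_corner_op_iff, ← op_mul, op_inj, op_eq_zero_iff]

theorem isRickartCorner_iff :
    IsRickartCorner e ↔ ∀ x ∈ corner e, (∃ f, IsLeftAnnihilatorIdempotent e x f) ∧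
      ∃ g, IsLeftAnnihilatorIdempotent (op e) (op x) (op g) := by
  simp only [IsRickartCorner, isLeftAnnihilatorIdempotent_op_iff]
  simp only [isLeftAnnihilatorIdempotent_iff]

namespace IsLeftAnnihilatorIdempotent

theorem mul_mul_eq_mul (hf : IsLeftAnnihilatorIdempotent u x f) (hu : IsIdempotentElem u)
    (he : IsIdempotentElem e) (heu : e ∈ corner u) (hx : x ∈ corner e) :
    e * (f * e) = f * e := by
  have hux : u * x = x := ((mem_corner_iff hu).1 (corner_subset_corner heu hx)).1
  have hex : e * x = x := ((mem_corner_iff he).1 hx).1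
  have hue : u * e = e := ((mem_corner_iff hu).1 heu).1
  have huf : u * f = f := ((mem_corner_iff hu).1 hf.mem_corner).1
  have hself : (u - e) * f = u - e :=
    hf.mul_eq_self _ (sub_mem_corner (self_mem_corner hu) heu) (by rw [sub_mul, hux, hex, sub_self])
  refine (sub_eq_zero.1 ?_).symm
  calc f * e - e * (f * e) = (u - e) * f * e := by rw [sub_mul, huf, sub_mul, mul_assoc e]
    _ = (u - e) * e := by rw [hself]
    _ = 0 := by rw [sub_mul, hue, he.eq, sub_self]

theorem mul_of_mem_corner (hf : IsLeftAnnihilatorIdempotent u x f) (hu : IsIdempotentElem u)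
    (he : IsIdempotentElem e) (heu : e ∈ corner u) (hx : x ∈ corner e) :
    IsLeftAnnihilatorIdempotent e x (f * e) where
  mem_corner := (mem_corner_iff he).2 ⟨hf.mul_mul_eq_mul hu he heu hx, by rw [mul_assoc, he.eq]⟩
  mul_eq_zero := by rw [mul_assoc, ((mem_corner_iff he).1 hx).1, hf.mul_eq_zero]
  mul_eq_self y hy hyx := by
    rw [← mul_assoc, hf.mul_eq_self y (corner_subset_corner heu hy) hyx,
      ((mem_corner_iff he).1 hy).2]

end IsLeftAnnihilatorIdempotent

theorem IsRickartCorner.of_mem_corner (h : IsRickartCorner u) (hu : IsIdempotentElem u)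
    (he : IsIdempotentElem e) (heu : e ∈ corner u) : IsRickartCorner e := by
  rw [isRickartCorner_iff] at h ⊢
  intro x hx
  obtain ⟨⟨f, hf⟩, ⟨g, hg⟩⟩ := h x (corner_subset_corner heu hx)
  exact ⟨⟨f * e, hf.mul_of_mem_corner hu he heu hx⟩,
    ⟨e * g, hg.mul_of_mem_corner (congrArg op hu) (congrArg op he) (op_mem_corner_op_iff.2 heu)
      (op_mem_corner_op_iff.2 hx)⟩⟩

end Rickart

theorem IsLocalUnits.exists_mem_corner {S : Type*} [NonUnitalRing S] {U : Set S}
    (hU : IsLocalUnits U) (x : S) : ∃ u ∈ U, x ∈ corner u := by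
  obtain ⟨u, hu, hunit⟩ := hU.2 {x}
  exact ⟨u, hu, (mem_corner_iff (hU.1 u hu)).2 (hunit x (Finset.mem_singleton_self x))⟩

theorem stmt_2_general {S : Type*} [NonUnitalRing S] (U : Set S)
    (hU : ∀ u ∈ U, IsIdempotentElem u)
    (hcover : ∀ e : S, IsIdempotentElem e → ∃ u ∈ U, e ∈ corner u) :
    (∀ u ∈ U, IsRickartCorner u) ↔ ∀ e : S, IsIdempotentElem e → IsRickartCorner e := by
  refine ⟨fun h e he => ?_, fun h u hu => h u (hU u hu)⟩
  obtain ⟨u, hu, heu⟩ := hcover e he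
  exact (h u hu).of_mem_corner (hU u hu) he heu

/-- If `U` is a set of local units for `S`, then `uSu` is a Rickart ring for every
`u ∈ U` iff `S` is locally Rickart, i.e. `eSe` is a Rickart ring for every
idempotent `e ∈ S`. -/
theorem stmt_2 {S : Type*} [NonUnitalRing S] (U : Set S) (hU : IsLocalUnits U) :
    (∀ u ∈ U, IsRickartCorner u) ↔ ∀ e : S, IsIdempotentElem e → IsRickartCorner e :=
  stmt_2_general U hU.1 fun e _ => hU.exists_mem_corner e
end

section
/- Let n ∈ ℕ and let S₁, …, Sₙ be rings (not necessarily unital). The direct product S = Π_{i=1}^n S_i is locally Rickart if and only if each S_i is locally Rickart. -/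
/-- A ring is locally Rickart if the corner `eSe` is a Rickart ring for every
idempotent `e ∈ S`. -/
def IsLocallyRickart (S : Type*) [NonUnitalRing S] : Prop :=
  ∀ e : S, IsIdempotentElem e → IsRickartCorner e

/-!
The corner of a product of rings at `e` is the product of the corners at the coordinates `e i`, and
likewise for annihilators and for the one-sided ideals generated by an element. A product of
nonempty sets determines its factors, so the Rickart condition at a single element `x` holds exactly
when it holds at every coordinate `x i`. Finally, any coordinate of an element of a corner, or of an
idempotent, may be prescribed arbitrarily, because `0` is available at the other indices.
-/

section SetPi

variable {ι : Type*} {α : ι → Type*} {s t : ∀ i, Set (α i)}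

theorem univ_pi_inj_of_nonempty (hs : (Set.univ.pi s).Nonempty) (ht : (Set.univ.pi t).Nonempty) :
    Set.univ.pi s = Set.univ.pi t ↔ ∀ i, s i = t i := by
  refine ⟨fun h i => ?_, fun h => congrArg _ (funext h)⟩
  rw [← Set.eval_image_univ_pi hs, h, Set.eval_image_univ_pi ht]

theorem forall_mem_univ_pi_apply_iff (hs : (Set.univ.pi s).Nonempty)
    (P : ∀ i, α i → Prop) :
    (∀ x ∈ Set.univ.pi s, ∀ i, P i (x i)) ↔ ∀ i, ∀ a ∈ s i, P i a := by
  refine ⟨fun h i a ha => ?_, fun h x hx i => h i (x i) (hx i trivial)⟩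
  obtain ⟨x, hx, rfl⟩ := Set.subset_eval_image_pi hs i ha
  exact h x hx i

end SetPi

section Corner

variable {R : Type*} [NonUnitalRing R]

theorem zero_mem_corner (e : R) : 0 ∈ corner e :=
  ⟨0, by simp⟩

/-- The left annihilator of `x` in the corner at `e`. -/
def cornerLeftAnnihilator (e x : R) : Set R :=
  {y | y ∈ corner e ∧ y * x = 0}

/-- The right annihilator of `x` in the corner at `e`. -/
def cornerRightAnnihilator (e x : R) : Set R :=
  {y | y ∈ corner e ∧ x * y = 0}

/-- The principal left ideal `(eRe)f` of the corner at `e`. -/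
def cornerLeftIdeal (e f : R) : Set R :=
  {y | ∃ z ∈ corner e, y = z * f}

/-- The principal right ideal `g(eRe)` of the corner at `e`. -/
def cornerRightIdeal (e g : R) : Set R :=
  {y | ∃ z ∈ corner e, y = g * z}

/-- The left half of the Rickart condition for the corner at `e`, at the single element `x`. -/
def IsLeftRickartAt (e x : R) : Prop :=
  ∃ f ∈ corner e, IsIdempotentElem f ∧ cornerLeftAnnihilator e x = cornerLeftIdeal e f

/-- The right half of the Rickart condition for the corner at `e`, at the single element `x`. -/
def IsRightRickartAt (e x : R) : Prop :=
  ∃ g ∈ corner e, IsIdempotentElem g ∧ cornerRightAnnihilator e x = cornerRightIdeal e g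

theorem isRickartCorner_iff_s9 {e : R} :
    IsRickartCorner e ↔ ∀ x ∈ corner e, IsLeftRickartAt e x ∧ IsRightRickartAt e x :=
  Iff.rfl

theorem zero_mem_cornerLeftAnnihilator (e x : R) : 0 ∈ cornerLeftAnnihilator e x :=
  ⟨zero_mem_corner e, zero_mul x⟩

theorem zero_mem_cornerRightAnnihilator (e x : R) : 0 ∈ cornerRightAnnihilator e x :=
  ⟨zero_mem_corner e, mul_zero x⟩

theorem zero_mem_cornerLeftIdeal (e f : R) : 0 ∈ cornerLeftIdeal e f :=
  ⟨0, zero_mem_corner e, (zero_mul f).symm⟩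

theorem zero_mem_cornerRightIdeal (e g : R) : 0 ∈ cornerRightIdeal e g :=
  ⟨0, zero_mem_corner e, (mul_zero g).symm⟩

end Corner

section Pi

variable {ι : Type*} {S : ι → Type*} [∀ i, NonUnitalRing (S i)]

theorem isIdempotentElem_pi_iff {e : ∀ i, S i} :
    IsIdempotentElem e ↔ ∀ i, IsIdempotentElem (e i) :=
  funext_iff

theorem corner_pi (e : ∀ i, S i) : corner e = Set.univ.pi fun i => corner (e i) :=
  Set.range_piMap fun i (y : S i) => e i * y * e i

theorem mem_corner_pi_iff {e x : ∀ i, S i} : x ∈ corner e ↔ ∀ i, x i ∈ corner (e i) := by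
  rw [corner_pi, Set.mem_univ_pi]

theorem cornerLeftAnnihilator_pi (e x : ∀ i, S i) :
    cornerLeftAnnihilator e x = Set.univ.pi fun i => cornerLeftAnnihilator (e i) (x i) := by
  ext y
  simp only [cornerLeftAnnihilator, Set.mem_ofPred_eq, Set.mem_univ_pi, mem_corner_pi_iff,
    funext_iff, Pi.mul_apply, Pi.zero_apply, forall_and]

theorem cornerRightAnnihilator_pi (e x : ∀ i, S i) :
    cornerRightAnnihilator e x = Set.univ.pi fun i => cornerRightAnnihilator (e i) (x i) := by
  ext y
  simp only [cornerRightAnnihilator, Set.mem_ofPred_eq, Set.mem_univ_pi, mem_corner_pi_iff,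
    funext_iff, Pi.mul_apply, Pi.zero_apply, forall_and]

theorem cornerLeftIdeal_pi (e f : ∀ i, S i) :
    cornerLeftIdeal e f = Set.univ.pi fun i => cornerLeftIdeal (e i) (f i) := by
  ext y
  simp only [cornerLeftIdeal, Set.mem_ofPred_eq, Set.mem_univ_pi, mem_corner_pi_iff,
    funext_iff, Pi.mul_apply, Classical.skolem, forall_and]

theorem cornerRightIdeal_pi (e g : ∀ i, S i) :
    cornerRightIdeal e g = Set.univ.pi fun i => cornerRightIdeal (e i) (g i) := by
  ext y
  simp only [cornerRightIdeal, Set.mem_ofPred_eq, Set.mem_univ_pi, mem_corner_pi_iff,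
    funext_iff, Pi.mul_apply, Classical.skolem, forall_and]

theorem cornerLeftAnnihilator_eq_cornerLeftIdeal_pi_iff {e x f : ∀ i, S i} :
    cornerLeftAnnihilator e x = cornerLeftIdeal e f ↔
      ∀ i, cornerLeftAnnihilator (e i) (x i) = cornerLeftIdeal (e i) (f i) := by
  rw [cornerLeftAnnihilator_pi, cornerLeftIdeal_pi]
  exact univ_pi_inj_of_nonempty ⟨0, fun i _ => zero_mem_cornerLeftAnnihilator (e i) (x i)⟩
    ⟨0, fun i _ => zero_mem_cornerLeftIdeal (e i) (f i)⟩

theorem cornerRightAnnihilator_eq_cornerRightIdeal_pi_iff {e x g : ∀ i, S i} :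
    cornerRightAnnihilator e x = cornerRightIdeal e g ↔
      ∀ i, cornerRightAnnihilator (e i) (x i) = cornerRightIdeal (e i) (g i) := by
  rw [cornerRightAnnihilator_pi, cornerRightIdeal_pi]
  exact univ_pi_inj_of_nonempty ⟨0, fun i _ => zero_mem_cornerRightAnnihilator (e i) (x i)⟩
    ⟨0, fun i _ => zero_mem_cornerRightIdeal (e i) (g i)⟩

theorem isLeftRickartAt_pi_iff {e x : ∀ i, S i} :
    IsLeftRickartAt e x ↔ ∀ i, IsLeftRickartAt (e i) (x i) := by
  simp only [IsLeftRickartAt, mem_corner_pi_iff, isIdempotentElem_pi_iff,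
    cornerLeftAnnihilator_eq_cornerLeftIdeal_pi_iff, Classical.skolem, forall_and]

theorem isRightRickartAt_pi_iff {e x : ∀ i, S i} :
    IsRightRickartAt e x ↔ ∀ i, IsRightRickartAt (e i) (x i) := by
  simp only [IsRightRickartAt, mem_corner_pi_iff, isIdempotentElem_pi_iff,
    cornerRightAnnihilator_eq_cornerRightIdeal_pi_iff, Classical.skolem, forall_and]

theorem isRickartCorner_pi_iff {e : ∀ i, S i} :
    IsRickartCorner e ↔ ∀ i, IsRickartCorner (e i) := by
  simp only [isRickartCorner_iff_s9, isLeftRickartAt_pi_iff, isRightRickartAt_pi_iff, ← forall_and,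
    corner_pi]
  exact forall_mem_univ_pi_apply_iff ⟨0, fun i _ => zero_mem_corner (e i)⟩
    fun i a => IsLeftRickartAt (e i) a ∧ IsRightRickartAt (e i) a

end Pi

theorem stmt_9_general {ι : Type*} (S : ι → Type*) [∀ i, NonUnitalRing (S i)] :
    IsLocallyRickart (∀ i, S i) ↔ ∀ i, IsLocallyRickart (S i) := by
  let idempotents (i : ι) : Set (S i) := {e | IsIdempotentElem e}
  have idempotents_nonempty : (Set.univ.pi idempotents).Nonempty :=
    ⟨0, fun _ _ => IsIdempotentElem.zero⟩
  calc IsLocallyRickart (∀ i, S i)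
    _ ↔ ∀ e ∈ Set.univ.pi idempotents, ∀ i, IsRickartCorner (e i) := by
      simp only [IsLocallyRickart, isIdempotentElem_pi_iff, isRickartCorner_pi_iff,
        idempotents, Set.mem_univ_pi, Set.mem_ofPred_eq]
    _ ↔ ∀ i, ∀ e ∈ idempotents i, IsRickartCorner e :=
      forall_mem_univ_pi_apply_iff idempotents_nonempty fun _ e => IsRickartCorner e
    _ ↔ ∀ i, IsLocallyRickart (S i) := Iff.rfl

/-- A finite direct product of rings is locally Rickart iff each factor is. -/
theorem stmt_9 (n : ℕ) (S : Fin n → Type*) [∀ i, NonUnitalRing (S i)] :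
    IsLocallyRickart (∀ i, S i) ↔ ∀ i, IsLocallyRickart (S i) :=
  stmt_9_general S
end
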